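/- Let A be a 7×n real matrix with all entries nonnegative whose (classical) rank equals 3. Then the nonnegative rank of A is at most 6; that is, there exist a 7×6 matrix B and a 6×n matrix C, both with all entries nonnegative, such that A = B·C. -/

import Mathlib

/-!
If some row of `A` is a nonnegative combination of the other six, those six rows factor `A`.
Otherwise the rows, seen as vectors of a three-dimensional space, span seven distinct extreme rays
of a pointed cone and hence can be ordered as a convex heptagon. Rescaling its vertices so that
`b₀ + b₂ = b₁ + b₃` and `b₃ + b₅ = b₄ + b₆`, where `b` denotes the rescaled rows, one obtains six
nonnegative factors, among them the entrywise minimum of `b₀`, `b₃` and `b₆`, provided that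
`b₃ ≤ b₀ + b₄` and `b₃ ≤ b₂ + b₆`. Each of these two inequalities amounts to a comparison of
products of Plücker coordinates. For every convex heptagon both comparisons hold after a cyclic
relabelling: the first failing at a vertex forces the second to hold three vertices further on, so
that otherwise one of them would fail at all seven vertices, which contradicts the Plücker
relations.
-/

section NonnegRank

/-- The nonnegative rank of `A` is at most `k`. -/
def NonnegRankLE {m n R : Type*} [Semiring R] [LE R] (A : Matrix m n R) (k : ℕ) : Prop :=
  ∃ (B : Matrix m (Fin k) R) (C : Matrix (Fin k) n R),
    (∀ i j, 0 ≤ B i j) ∧ (∀ i j, 0 ≤ C i j) ∧ A = B * C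

namespace NonnegRankLE

variable {l m n : Type*}

theorem submatrix_left {R : Type*} [Semiring R] [LE R] {A : Matrix m n R} {k : ℕ}
    (h : NonnegRankLE A k) (f : l → m) : NonnegRankLE (A.submatrix f id) k := by
  obtain ⟨B, C, hB, hC, rfl⟩ := h
  exact ⟨B.submatrix f id, C, fun i => hB (f i), hC, rfl⟩

theorem of_submatrix_perm {R : Type*} [Semiring R] [LE R] {A : Matrix m n R} {k : ℕ}
    (σ : Equiv.Perm m) (h : NonnegRankLE (A.submatrix σ id) k) : NonnegRankLE A k := by
  simpa using h.submatrix_left σ.symm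

theorem of_row_scaling {K : Type*} [Field K] [LinearOrder K] [IsStrictOrderedRing K]
    {A : Matrix m n K} {k : ℕ} {w : m → K} (hw : ∀ i, 0 < w i)
    (h : NonnegRankLE (Matrix.of fun i j => w i * A i j) k) : NonnegRankLE A k := by
  obtain ⟨B, C, hB, hC, hBC⟩ := h
  refine ⟨Matrix.of fun i k => (w i)⁻¹ * B i k, C,
    fun i k => mul_nonneg (inv_nonneg.2 (hw i).le) (hB i k), hC, ?_⟩
  ext i j
  have hij : w i * A i j = ∑ k, B i k * C k j := congrFun (congrFun hBC i) j
  simp only [Matrix.mul_apply, Matrix.of_apply, mul_assoc, ← Finset.mul_sum, ← hij,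
    inv_mul_cancel_left₀ (hw i).ne']

theorem of_row_eq_sum {R : Type*} [Semiring R] [PartialOrder R] [IsOrderedRing R] {k : ℕ}
    {A : Matrix (Fin (k + 1)) n R} (hA : ∀ i j, 0 ≤ A i j) (i : Fin (k + 1)) {c : Fin k → R}
    (hc : ∀ l, 0 ≤ c l) (h : A i = ∑ l, c l • A (i.succAbove l)) : NonnegRankLE A k := by
  refine ⟨Matrix.of (i.insertNth (α := fun _ => Fin k → R) c fun l => Pi.single l 1),
    A.submatrix i.succAbove id, fun i' l => ?_, fun l => hA _, ?_⟩
  · cases i' using i.succAboveCases with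
    | x => simpa using hc l
    | p i' =>
      have h01 : 0 ≤ (Pi.single i' 1 : Fin k → R) := Pi.single_nonneg.2 zero_le_one
      simpa using h01 l
  · ext i' j
    cases i' using i.succAboveCases with
    | x => simp [h, Matrix.mul_apply, Finset.sum_apply]
    | p i' => simp [Matrix.mul_apply, Pi.single_apply]

theorem six_of_row_relations {R : Type*} [CommRing R] [LinearOrder R] [IsStrictOrderedRing R]
    {b : Matrix (Fin 7) n R} (hb : ∀ i j, 0 ≤ b i j)
    (h₁ : ∀ j, b 0 j + b 2 j = b 1 j + b 3 j) (h₂ : ∀ j, b 3 j + b 5 j = b 4 j + b 6 j)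
    (h₃ : ∀ j, b 3 j ≤ b 0 j + b 4 j) (h₄ : ∀ j, b 3 j ≤ b 2 j + b 6 j) :
    NonnegRankLE b 6 := by
  let m : n → R := fun j => min (b 3 j) (min (b 0 j) (b 6 j))
  have hm₀ j : m j ≤ b 0 j := (min_le_right _ _).trans (min_le_left _ _)
  have hm₃ j : m j ≤ b 3 j := min_le_left _ _
  have hm₆ j : m j ≤ b 6 j := (min_le_right _ _).trans (min_le_right _ _)
  have hm j : 0 ≤ m j := le_min (hb 3 j) (le_min (hb 0 j) (hb 6 j))
  have hm₂ j : b 3 j - b 2 j ≤ m j :=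
    le_min (by linarith [hb 2 j]) (le_min (by linarith [hb 1 j, h₁ j]) (by linarith [h₄ j]))
  have hm₄ j : b 3 j - b 4 j ≤ m j :=
    le_min (by linarith [hb 4 j]) (le_min (by linarith [h₃ j]) (by linarith [hb 5 j, h₂ j]))
  refine ⟨(!![1, 1, 0, 0, 0, 0;
              0, 1, 0, 0, 1, 0;
              0, 0, 1, 0, 1, 0;
              1, 0, 1, 0, 0, 0;
              0, 0, 1, 0, 0, 1;
              0, 0, 0, 1, 0, 1;
              1, 0, 0, 1, 0, 0] : Matrix (Fin 7) (Fin 6) ℕ).map (↑),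
    Matrix.of ![m, fun j => b 0 j - m j, fun j => b 3 j - m j, fun j => b 6 j - m j,
      fun j => b 2 j - (b 3 j - m j), fun j => b 4 j - (b 3 j - m j)],
    fun _ _ => Nat.cast_nonneg _, fun k j => ?_, ?_⟩
  · fin_cases k <;> simp <;> linarith [hm j, hm₀ j, hm₂ j, hm₃ j, hm₄ j, hm₆ j]
  · ext i j
    fin_cases i <;> simp [Matrix.mul_apply, Fin.sum_univ_six] <;> linarith [h₁ j, h₂ j]

end NonnegRankLE

end NonnegRank

section ConicIndependent

/-- A linear relation among the vectors `p k` with at most one positive coefficient is trivial;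
that is, these vectors span distinct extreme rays of a pointed cone. -/
def ConicIndependent (R : Type*) {ι V : Type*} [Fintype ι] [Semiring R] [LE R] [AddCommMonoid V]
    [Module R V] (p : ι → V) : Prop :=
  ∀ c : ι → R, ∑ k, c k • p k = 0 → ∀ i, (∀ k, k ≠ i → c k ≤ 0) → c = 0

namespace ConicIndependent

theorem of_linearMap_comp {R ι V W : Type*} [Fintype ι] [Semiring R] [LE R] [AddCommMonoid V]
    [AddCommMonoid W] [Module R V] [Module R W] {p : ι → V} (φ : V →ₗ[R] W)
    (h : ConicIndependent R (φ ∘ p)) : ConicIndependent R p := by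
  intro c hc
  exact h c (by simpa using congrArg φ hc)

theorem comp_injective {R ι κ V : Type*} [Fintype ι] [Fintype κ] [Semiring R] [Preorder R]
    [AddCommMonoid V] [Module R V] {p : ι → V} (h : ConicIndependent R p) {f : κ → ι}
    (hf : Function.Injective f) : ConicIndependent R (p ∘ f) := by
  intro c hc i hi
  have hsum : ∑ k, Function.extend f c 0 k • p k = 0 := by
    rw [← hc]
    refine (Fintype.sum_of_injective f hf _ _ (fun k hk => ?_) fun k => ?_).symm
    · simp [Function.extend_apply' c (0 : ι → R) k hk]
    · simp [hf.extend_apply]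
  have hext : Function.extend f c 0 = 0 := by
    refine h _ hsum (f i) fun k hk => ?_
    by_cases hkf : ∃ j, f j = k
    · obtain ⟨j, rfl⟩ := hkf
      rw [hf.extend_apply]
      exact hi j (by rintro rfl; exact hk rfl)
    · simp [Function.extend_apply' c (0 : ι → R) k hkf]
  simpa [Function.extend_comp hf] using congrArg (· ∘ f) hext

theorem linearIndependent {R V : Type*} [Ring R] [LinearOrder R] [IsOrderedRing R]
    [AddCommGroup V] [Module R V] {p : Fin 3 → V} (h : ConicIndependent R p) :
    LinearIndependent R p := by
  refine Fintype.linearIndependent_iff.2 fun c hc => ?_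
  have hsign : ∃ i, (∀ k, k ≠ i → c k ≤ 0) ∨ ∀ k, k ≠ i → 0 ≤ c k := by
    simp only [Fin.forall_fin_succ, Fin.exists_fin_succ]
    grind
  obtain ⟨i, hi | hi⟩ := hsign
  · exact congrFun (h c hc i hi)
  · have := h (-c) (by simpa using hc) i (by simpa using hi)
    exact congrFun (neg_eq_zero.1 this)

theorem of_not_nonnegRankLE {K n : Type*} [Field K] [LinearOrder K] [IsStrictOrderedRing K]
    {k : ℕ} {A : Matrix (Fin (k + 1)) n K} (hA : ∀ i j, 0 ≤ A i j) (h : ¬NonnegRankLE A k) :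
    ConicIndependent K A.row := by
  intro c hc i hi
  change ∑ l, c l • A l = 0 at hc
  have hrow i : A i ≠ 0 := fun hi =>
    h <| .of_row_eq_sum hA i (c := 0) (fun _ => le_rfl) (by simp [hi])
  have hci : c i ≤ 0 := by
    by_contra! hci
    refine h <| .of_row_eq_sum hA i (c := fun l => (c i)⁻¹ * -c (i.succAbove l)) (fun l => ?_) ?_
    · exact mul_nonneg (inv_nonneg.2 hci.le) (neg_nonneg.2 (hi _ (i.succAbove_ne l)))
    · rw [Fin.sum_univ_succAbove _ i] at hc
      simp_rw [mul_smul, ← Finset.smul_sum, neg_smul, Finset.sum_neg_distrib]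
      rw [← eq_neg_of_add_eq_zero_left hc, inv_smul_smul₀ hci.ne']
  have hc' l : c l ≤ 0 := by
    by_cases hl : l = i
    · exact hl ▸ hci
    · exact hi l hl
  ext l
  obtain ⟨j, hj⟩ := Function.ne_iff.1 (hrow l)
  have hsum : ∑ l, c l * A l j = 0 := by simpa using congrFun hc j
  have := (Finset.sum_eq_zero_iff_of_nonpos fun l _ =>
    mul_nonpos_of_nonpos_of_nonneg (hc' l) (hA l j)).1 hsum l (Finset.mem_univ l)
  exact (mul_eq_zero.1 this).resolve_right hj

end ConicIndependent

end ConicIndependent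

theorem exists_eq_linearMap_comp_of_rank_le {m n K : Type*} [Finite m] [Fintype n] [Field K]
    {A : Matrix m n K} {r : ℕ} (h : A.rank ≤ r) :
    ∃ (φ : (Fin r → K) →ₗ[K] n → K) (p : m → Fin r → K), A = Matrix.of (φ ∘ p) := by
  rw [Matrix.rank_eq_finrank_span_row, ← Module.finrank_fin_fun K (n := r),
    finrank_le_iff_exists_linearMap] at h
  obtain ⟨ψ, hψ⟩ := h
  obtain ⟨φ, hφ⟩ := ψ.exists_leftInverse_of_injective (LinearMap.ker_eq_bot.2 hψ)
  refine ⟨Submodule.subtype _ ∘ₗ φ, fun i => ψ ⟨A i, Submodule.subset_span ⟨i, rfl⟩⟩, ?_⟩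
  ext i j
  simp [← LinearMap.comp_apply, hφ]

section PluckerCoord

/-- The `3 × 3` minor on the vectors `p i`, `p j`, `p k`, positive when these occur in
counterclockwise order around a pointed cone. -/
def pluckerCoord {ι R : Type*} [CommRing R] (p : ι → Fin 3 → R) (i j k : ι) : R :=
  Matrix.det (Matrix.of ![p i, p j, p k])

variable {ι R : Type*} [CommRing R] (p : ι → Fin 3 → R)

local notation "Δ" => pluckerCoord p

theorem pluckerCoord_eq (i j k : ι) :
    Δ i j k = p i 0 * (p j 1 * p k 2 - p j 2 * p k 1) - p i 1 * (p j 0 * p k 2 - p j 2 * p k 0) +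
      p i 2 * (p j 0 * p k 1 - p j 1 * p k 0) := by
  simp only [pluckerCoord, Matrix.det_fin_three, Matrix.of_apply, Matrix.cons_val]
  ring

theorem pluckerCoord_rotate (i j k : ι) : Δ j k i = Δ i j k := by
  simp only [pluckerCoord_eq]
  ring

theorem pluckerCoord_swap_right (i j k : ι) : Δ i k j = -Δ i j k := by
  simp only [pluckerCoord_eq]
  ring

theorem pluckerCoord_reverse (i j k : ι) : Δ k j i = -Δ i j k := by
  rw [← pluckerCoord_rotate, pluckerCoord_swap_right, pluckerCoord_rotate]

@[simp]
theorem pluckerCoord_self_right (i j : ι) : Δ i j j = 0 := by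
  simp only [pluckerCoord_eq]
  ring

theorem pluckerCoord_neg (i j k : ι) : pluckerCoord (-p) i j k = -Δ i j k := by
  simp only [pluckerCoord_eq, Pi.neg_apply]
  ring

theorem cramer_relation (i j k l : ι) :
    Δ j k l • p i + Δ i j l • p k = Δ i k l • p j + Δ i j k • p l := by
  ext x
  fin_cases x <;> simp [pluckerCoord_eq] <;> ring

theorem plucker_relation_first (o i j k l : ι) :
    Δ o i k * Δ o j l = Δ o i j * Δ o k l + Δ o i l * Δ o j k := by
  simp only [pluckerCoord_eq]
  ring

theorem plucker_relation_second (i o j k l : ι) :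
    Δ i o k * Δ o j l = Δ i o j * Δ o k l + Δ i o l * Δ o j k := by
  simp only [pluckerCoord_eq]
  ring

theorem plucker_relation_third (i j o k l : ι) :
    Δ i o k * Δ j o l = Δ i j o * Δ o k l + Δ i o l * Δ j o k := by
  simp only [pluckerCoord_eq]
  ring

end PluckerCoord

namespace ConicIndependent

theorem pluckerCoord_pos_of_pos {ι R : Type*} [Fintype ι] [CommRing R] [LinearOrder R]
    [IsOrderedRing R] {p : ι → Fin 3 → R} (h : ConicIndependent R p) {o x y z : ι}
    (hinj : Function.Injective ![o, x, y, z]) (hxy : 0 < pluckerCoord p o x y)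
    (hyz : 0 < pluckerCoord p o y z) : 0 < pluckerCoord p o x z ∧ 0 < pluckerCoord p x y z := by
  let c : Fin 4 → R :=
    ![pluckerCoord p x y z, -pluckerCoord p o y z, pluckerCoord p o x z, -pluckerCoord p o x y]
  have hrel : ∑ k, c k • (p ∘ ![o, x, y, z]) k = 0 := by
    simp only [c, Fin.sum_univ_four, Matrix.cons_val, Function.comp_apply, neg_smul]
    linear_combination (norm := module) cramer_relation p o x y z
  have hc : c ≠ 0 := fun hc => hxy.ne' (neg_eq_zero.1 (congrFun hc 3))
  have hsign := h.comp_injective hinj c hrel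
  constructor <;> by_contra! hneg
  · refine hc (hsign 0 ?_)
    simp [c, Fin.forall_fin_succ, hxy.le, hyz.le, hneg]
  · refine hc (hsign 2 ?_)
    simp [c, Fin.forall_fin_succ, hxy.le, hyz.le, hneg]

variable {ι K : Type*} [Fintype ι] [Field K] [LinearOrder K] [IsStrictOrderedRing K]
  {p : ι → Fin 3 → K}

local notation "Δ" => pluckerCoord p

theorem pluckerCoord_ne_zero (h : ConicIndependent K p) {i j k : ι} (hij : i ≠ j) (hik : i ≠ k)
    (hjk : j ≠ k) : Δ i j k ≠ 0 := by
  have hinj : Function.Injective ![i, j, k] :=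
    List.nodup_ofFn.1 (by simp [hij, hik, hjk])
  have hli := (h.comp_injective hinj).linearIndependent
  have hrows : p ∘ ![i, j, k] = (Matrix.of ![p i, p j, p k]).row := by
    ext x : 1
    fin_cases x <;> rfl
  rw [hrows, Matrix.linearIndependent_rows_iff_isUnit, Matrix.isUnit_iff_isUnit_det] at hli
  exact hli.ne_zero

theorem isStrictTotalOrder_pluckerCoord_pos {κ : Type*} (h : ConicIndependent K p) {o : ι}
    {f : κ → ι} (hf : Function.Injective f) (ho : ∀ x, o ≠ f x) :
    IsStrictTotalOrder κ fun x y => 0 < Δ o (f x) (f y) where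
  irrefl x := by simp
  trichotomous x y hxy hyx := by
    by_contra hne
    refine hyx ?_
    rw [pluckerCoord_swap_right, neg_pos]
    exact (h.pluckerCoord_ne_zero (ho x) (ho y) (hf.ne hne)).lt_of_le (not_lt.1 hxy)
  trans x y z hxy hyz := by
    have hxy' : f x ≠ f y := fun hf => by simp [hf] at hxy
    have hyz' : f y ≠ f z := fun hf => by simp [hf] at hyz
    have hxz : f x ≠ f z := fun hf => by
      rw [← hf, pluckerCoord_swap_right, neg_pos] at hyz
      exact hyz.not_gt hxy
    have hinj : Function.Injective ![o, f x, f y, f z] :=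
      List.nodup_ofFn.1 (by simp [ho, hxy', hyz', hxz])
    exact (h.pluckerCoord_pos_of_pos hinj hxy hyz).1

end ConicIndependent

section IsConvexPolygon

/-- The vectors `p 0, p 1, …` span the successive edges, in counterclockwise order, of a strictly
convex pointed cone; a plane section of this cone is a convex polygon. -/
def IsConvexPolygon {R : Type*} [CommRing R] [LT R] {n : ℕ} (p : Fin n → Fin 3 → R) : Prop :=
  ∀ i j k, i < j → j < k → 0 < pluckerCoord p i j k

theorem exists_equiv_fin_of_isStrictTotalOrder {α : Type*} [Fintype α] {k : ℕ}
    (h : Fintype.card α = k) (r : α → α → Prop) [IsStrictTotalOrder α r] :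
    ∃ e : Fin k ≃ α, ∀ i j, i < j → r (e i) (e j) := by
  classical
  let _ := linearOrderOfSTO r
  exact ⟨(monoEquivOfFin α h).toEquiv, fun i j hij => (monoEquivOfFin α h).strictMono hij⟩

theorem ConicIndependent.exists_perm_isConvexPolygon {K : Type*} [Field K] [LinearOrder K]
    [IsStrictOrderedRing K] {n : ℕ} {p : Fin (n + 1) → Fin 3 → K} (h : ConicIndependent K p) :
    ∃ σ : Equiv.Perm (Fin (n + 1)), IsConvexPolygon (p ∘ σ) := by
  have := h.isStrictTotalOrder_pluckerCoord_pos (Fin.succ_injective n)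
    fun x => x.succ_ne_zero.symm
  obtain ⟨e, he⟩ := exists_equiv_fin_of_isStrictTotalOrder (Fintype.card_fin n)
    fun x y : Fin n => 0 < pluckerCoord p 0 x.succ y.succ
  refine ⟨Equiv.Perm.decomposeFin.symm (0, e), fun i j k hij hjk => ?_⟩
  obtain ⟨j, rfl⟩ := Fin.exists_succ_eq.2 (Fin.ne_zero_of_lt hij)
  obtain ⟨k, rfl⟩ := Fin.exists_succ_eq.2 (Fin.ne_zero_of_lt hjk)
  rw [Fin.succ_lt_succ_iff] at hjk
  cases i using Fin.cases with
  | zero => simpa [pluckerCoord] using he _ _ hjk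
  | succ i =>
    rw [Fin.succ_lt_succ_iff] at hij
    have hinj : Function.Injective ![0, (e i).succ, (e j).succ, (e k).succ] :=
      List.nodup_ofFn.1 <| by
        simp [hij.ne, hjk.ne, (hij.trans hjk).ne, (Fin.succ_ne_zero _).symm]
    simpa [pluckerCoord] using (h.pluckerCoord_pos_of_pos hinj (he _ _ hij) (he _ _ hjk)).2

variable {R : Type*} {n : ℕ}

/-- The polygon with its vertices cyclically relabelled, vertex `s` becoming vertex `0`. -/
def rotatePolygon (s : Fin n) (p : Fin n → Fin 3 → R) : Fin n → Fin 3 → R :=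
  fun i => p (i + s)

/-- The polygon with its vertices listed backwards; the vectors are negated to keep the
orientation. -/
def reflectPolygon [Neg R] (p : Fin n → Fin 3 → R) : Fin n → Fin 3 → R :=
  fun i => -p i.rev

theorem rotatePolygon_rotatePolygon [NeZero n] (s t : Fin n) (p : Fin n → Fin 3 → R) :
    rotatePolygon s (rotatePolygon t p) = rotatePolygon (s + t) p := by
  ext i : 1
  simp [rotatePolygon, add_assoc]

theorem reflectPolygon_rotatePolygon [Neg R] [NeZero n] (s : Fin n) (p : Fin n → Fin 3 → R) :
    reflectPolygon (rotatePolygon s p) = rotatePolygon (-s) (reflectPolygon p) := by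
  ext i : 1
  simp [reflectPolygon, rotatePolygon, Fin.rev_add]

theorem pluckerCoord_reflectPolygon [CommRing R] (p : Fin n → Fin 3 → R) (i j k : Fin n) :
    pluckerCoord (reflectPolygon p) i j k = pluckerCoord p k.rev j.rev i.rev := by
  rw [pluckerCoord_reverse p]
  exact pluckerCoord_neg (p ∘ Fin.rev) i j k

namespace IsConvexPolygon

variable [CommRing R] [LT R] {p : Fin n → Fin 3 → R}

theorem pluckerCoord_pos (hp : IsConvexPolygon p) {i j k : Fin n} (hij : i < j := by decide)
    (hjk : j < k := by decide) : 0 < pluckerCoord p i j k :=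
  hp i j k hij hjk

theorem reflect (hp : IsConvexPolygon p) : IsConvexPolygon (reflectPolygon p) := by
  intro i j k hij hjk
  rw [pluckerCoord_reflectPolygon]
  exact hp _ _ _ (Fin.rev_lt_rev.2 hjk) (Fin.rev_lt_rev.2 hij)

theorem rotate (hp : IsConvexPolygon p) (s : Fin n) : IsConvexPolygon (rotatePolygon s p) := by
  intro i j k hij hjk
  change 0 < pluckerCoord p (i + s) (j + s) (k + s)
  have hcyc : (i + s < j + s ∧ j + s < k + s) ∨ (j + s < k + s ∧ k + s < i + s) ∨
      (k + s < i + s ∧ i + s < j + s) := by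
    simp only [Fin.lt_def, Fin.val_add_eq_ite] at *
    split_ifs <;> omega
  rcases hcyc with ⟨h₁, h₂⟩ | ⟨h₁, h₂⟩ | ⟨h₁, h₂⟩
  · exact hp _ _ _ h₁ h₂
  · rw [← pluckerCoord_rotate]
    exact hp _ _ _ h₁ h₂
  · rw [pluckerCoord_rotate p (k + s)]
    exact hp _ _ _ h₁ h₂

end IsConvexPolygon

end IsConvexPolygon

section Heptagon

variable {R : Type*} [CommRing R]

/-- The scaling of the vertices of a heptagon, unique up to a common factor, for which `0, 1, 2, 3`
and `3, 4, 5, 6` become parallelograms; see `heptagonWeight_relation_left` and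
`heptagonWeight_relation_right`. -/
def heptagonWeight (p : Fin 7 → Fin 3 → R) : Fin 7 → R :=
  let Δ := pluckerCoord p
  ![Δ 1 2 3 * Δ 4 5 6, Δ 0 2 3 * Δ 4 5 6, Δ 0 1 3 * Δ 4 5 6, Δ 0 1 2 * Δ 4 5 6,
    Δ 0 1 2 * Δ 3 5 6, Δ 0 1 2 * Δ 3 4 6, Δ 0 1 2 * Δ 3 4 5]

/-- With `w = heptagonWeight p`, the vector `w 2 • p 2 + w 6 • p 6 - w 3 • p 3` lies strictly
outside the side of the heptagon through the vertices `1` and `2`: the difference of the two sides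
of the inequality is, up to the factor `Δ 0 1 2`, the determinant of `p 1`, `p 2` and that
vector. -/
def EdgeObstructed [LT R] (p : Fin 7 → Fin 3 → R) : Prop :=
  pluckerCoord p 1 2 6 * pluckerCoord p 3 4 5 < pluckerCoord p 1 2 3 * pluckerCoord p 4 5 6

theorem heptagonWeight_reflectPolygon (p : Fin 7 → Fin 3 → R) (i : Fin 7) :
    heptagonWeight (reflectPolygon p) i = heptagonWeight p i.rev := by
  fin_cases i <;> simp [heptagonWeight, pluckerCoord_reflectPolygon, mul_comm]

theorem heptagonWeight_relation_left (p : Fin 7 → Fin 3 → R) :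
    heptagonWeight p 0 • p 0 + heptagonWeight p 2 • p 2 =
      heptagonWeight p 1 • p 1 + heptagonWeight p 3 • p 3 := by
  simp only [heptagonWeight, Matrix.cons_val]
  linear_combination (norm := module) pluckerCoord p 4 5 6 • cramer_relation p 0 1 2 3

theorem heptagonWeight_relation_right (p : Fin 7 → Fin 3 → R) :
    heptagonWeight p 3 • p 3 + heptagonWeight p 5 • p 5 =
      heptagonWeight p 4 • p 4 + heptagonWeight p 6 • p 6 := by
  simp only [heptagonWeight, Matrix.cons_val]
  linear_combination (norm := module) pluckerCoord p 0 1 2 • cramer_relation p 3 4 5 6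

theorem edgeObstructed_reflectPolygon_rotatePolygon_three [LT R] {p : Fin 7 → Fin 3 → R} :
    EdgeObstructed (reflectPolygon (rotatePolygon 3 p)) ↔
      pluckerCoord p 0 1 3 * pluckerCoord p 4 5 6 <
        pluckerCoord p 0 1 6 * pluckerCoord p 3 4 5 := by
  rw [pluckerCoord_rotate p 3 0 1, pluckerCoord_rotate p 6 0 1]
  simp only [EdgeObstructed, pluckerCoord_reflectPolygon]
  rfl

namespace IsConvexPolygon

variable [LinearOrder R] [IsStrictOrderedRing R] {p : Fin 7 → Fin 3 → R}

local notation "Δ" => pluckerCoord p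

theorem heptagonWeight_pos (hp : IsConvexPolygon p) (i : Fin 7) : 0 < heptagonWeight p i := by
  fin_cases i <;> exact mul_pos hp.pluckerCoord_pos hp.pluckerCoord_pos

theorem not_edgeObstructed_reflectPolygon_rotatePolygon_three (hp : IsConvexPolygon p)
    (h : EdgeObstructed p) : ¬EdgeObstructed (reflectPolygon (rotatePolygon 3 p)) := by
  rw [edgeObstructed_reflectPolygon_rotatePolygon_three]
  intro h'
  have h016 : 0 < Δ 0 1 6 := hp.pluckerCoord_pos
  have h126 : 0 < Δ 1 2 6 := hp.pluckerCoord_pos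
  have h456 : 0 < Δ 4 5 6 := hp.pluckerCoord_pos
  have hlt : Δ 0 1 6 * Δ 1 2 3 < Δ 0 1 3 * Δ 1 2 6 := by
    rw [plucker_relation_second p 0 1 2 3 6]
    exact lt_add_of_pos_left _ (mul_pos hp.pluckerCoord_pos hp.pluckerCoord_pos)
  refine lt_irrefl (Δ 4 5 6 * (Δ 0 1 6 * Δ 1 2 3)) ?_
  calc Δ 4 5 6 * (Δ 0 1 6 * Δ 1 2 3)
    _ < Δ 4 5 6 * (Δ 0 1 3 * Δ 1 2 6) := by gcongr
    _ = Δ 1 2 6 * (Δ 0 1 3 * Δ 4 5 6) := by ring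
    _ < Δ 1 2 6 * (Δ 0 1 6 * Δ 3 4 5) := by gcongr
    _ = Δ 0 1 6 * (Δ 1 2 6 * Δ 3 4 5) := by ring
    _ < Δ 0 1 6 * (Δ 1 2 3 * Δ 4 5 6) := mul_lt_mul_of_pos_left h h016
    _ = Δ 4 5 6 * (Δ 0 1 6 * Δ 1 2 3) := by ring

theorem exists_not_edgeObstructed (hp : IsConvexPolygon p) :
    ∃ s, ¬EdgeObstructed (rotatePolygon s p) := by
  by_contra! h
  have h₀ : Δ 1 2 6 * Δ 3 4 5 < Δ 1 2 3 * Δ 4 5 6 := h 0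
  have h₁ : Δ 0 2 3 * Δ 4 5 6 < Δ 2 3 4 * Δ 0 5 6 := by
    rw [← pluckerCoord_rotate p 0 2 3, ← pluckerCoord_rotate p 0 5 6]
    exact h 1
  have h₆ : Δ 0 1 5 * Δ 2 3 4 < Δ 0 1 2 * Δ 3 4 5 := h 6
  have h015 : 0 < Δ 0 1 5 := hp.pluckerCoord_pos
  have h023 : 0 < Δ 0 2 3 := hp.pluckerCoord_pos
  have h123 : 0 < Δ 1 2 3 := hp.pluckerCoord_pos
  have h126 : 0 < Δ 1 2 6 := hp.pluckerCoord_pos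
  have h234 : 0 < Δ 2 3 4 := hp.pluckerCoord_pos
  have h345 : 0 < Δ 3 4 5 := hp.pluckerCoord_pos
  have h456 : 0 < Δ 4 5 6 := hp.pluckerCoord_pos
  have hlt₀ : Δ 0 1 2 * Δ 0 5 6 < Δ 0 1 5 * Δ 0 2 6 := by
    rw [plucker_relation_first p 0 1 2 5 6]
    exact lt_add_of_pos_right _ (mul_pos hp.pluckerCoord_pos hp.pluckerCoord_pos)
  have hlt₂ : Δ 0 2 6 * Δ 1 2 3 < Δ 0 2 3 * Δ 1 2 6 := by
    rw [plucker_relation_third p 0 1 2 3 6]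
    exact lt_add_of_pos_left _ (mul_pos hp.pluckerCoord_pos hp.pluckerCoord_pos)
  let X := Δ 2 3 4 * Δ 3 4 5 * Δ 4 5 6
  refine lt_irrefl (X * Δ 0 1 5 * (Δ 0 2 3 * Δ 1 2 6)) ?_
  calc X * Δ 0 1 5 * (Δ 0 2 3 * Δ 1 2 6)
    _ = Δ 1 2 6 * Δ 3 4 5 * (Δ 0 2 3 * Δ 4 5 6) * (Δ 0 1 5 * Δ 2 3 4) := by ring
    _ < Δ 1 2 3 * Δ 4 5 6 * (Δ 2 3 4 * Δ 0 5 6) * (Δ 0 1 2 * Δ 3 4 5) := by gcongr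
    _ = X * Δ 1 2 3 * (Δ 0 1 2 * Δ 0 5 6) := by ring
    _ < X * Δ 1 2 3 * (Δ 0 1 5 * Δ 0 2 6) := by gcongr
    _ = X * Δ 0 1 5 * (Δ 0 2 6 * Δ 1 2 3) := by ring
    _ < X * Δ 0 1 5 * (Δ 0 2 3 * Δ 1 2 6) := by gcongr

theorem exists_not_edgeObstructed_and_reflectPolygon (hp : IsConvexPolygon p) :
    ∃ s, ¬EdgeObstructed (rotatePolygon s p) ∧
      ¬EdgeObstructed (reflectPolygon (rotatePolygon s p)) := by
  by_contra! h
  have hstep s (hs : EdgeObstructed (rotatePolygon s p)) :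
      EdgeObstructed (rotatePolygon (3 + s) p) := by
    by_contra hs'
    refine (hp.rotate s).not_edgeObstructed_reflectPolygon_rotatePolygon_three hs ?_
    rw [rotatePolygon_rotatePolygon]
    exact h _ hs'
  obtain ⟨s, hs⟩ := hp.exists_not_edgeObstructed
  obtain ⟨t, ht⟩ := hp.reflect.exists_not_edgeObstructed
  have ht' : EdgeObstructed (rotatePolygon (-t) p) := by
    by_contra ht'
    refine ht ?_
    simpa [reflectPolygon_rotatePolygon] using h _ ht'
  have hmultiples (k : ℕ) : EdgeObstructed (rotatePolygon (k • 3 + -t) p) := by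
    induction k with
    | zero => simpa using ht'
    | succ k ih => simpa only [succ_nsmul', add_assoc] using hstep _ ih
  obtain ⟨k, hk⟩ : ∃ k : Fin 7, k.val • 3 + -t = s := by
    clear * -
    decide +revert
  exact hs (hk ▸ hmultiples k)

theorem heptagonWeight_mul_le_add (hp : IsConvexPolygon p) (h : ¬EdgeObstructed p)
    {f : (Fin 3 → R) →ₗ[R] R} (hf : ∀ i, 0 ≤ f (p i)) :
    heptagonWeight p 3 * f (p 3) ≤ heptagonWeight p 2 * f (p 2) + heptagonWeight p 6 * f (p 6) := by
  have h126 : 0 < Δ 1 2 6 := hp.pluckerCoord_pos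
  have h012 : 0 < Δ 0 1 2 := hp.pluckerCoord_pos
  have h016 : 0 < Δ 0 1 6 := hp.pluckerCoord_pos
  have h123 : 0 < Δ 1 2 3 := hp.pluckerCoord_pos
  have h236 : 0 < Δ 2 3 6 := hp.pluckerCoord_pos
  have h456 : 0 < Δ 4 5 6 := hp.pluckerCoord_pos
  have hcramer := congrArg f (cramer_relation p 1 2 3 6)
  simp only [map_add, map_smul, smul_eq_mul] at hcramer
  -- The coordinates of the difference in the basis `p 1`, `p 2`, `p 6`, times their determinant.
  have hcoord : Δ 1 2 6 * (heptagonWeight p 2 * f (p 2) + heptagonWeight p 6 * f (p 6) -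
      heptagonWeight p 3 * f (p 3)) =
      Δ 0 1 2 * Δ 4 5 6 * Δ 2 3 6 * f (p 1) + Δ 0 1 6 * Δ 1 2 3 * Δ 4 5 6 * f (p 2) +
        Δ 0 1 2 * (Δ 1 2 6 * Δ 3 4 5 - Δ 1 2 3 * Δ 4 5 6) * f (p 6) := by
    simp only [heptagonWeight, Matrix.cons_val]
    linear_combination Δ 4 5 6 * f (p 2) * plucker_relation_second p 0 1 2 3 6 -
      Δ 0 1 2 * Δ 4 5 6 * hcramer
  have hobs : 0 ≤ Δ 1 2 6 * Δ 3 4 5 - Δ 1 2 3 * Δ 4 5 6 := sub_nonneg.2 (not_lt.1 h)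
  have hf₁ := hf 1
  have hf₂ := hf 2
  have hf₆ := hf 6
  refine sub_nonneg.1 (nonneg_of_mul_nonneg_right ?_ h126)
  rw [hcoord]
  positivity

theorem nonnegRankLE_six {K n : Type*} [Field K] [LinearOrder K] [IsStrictOrderedRing K]
    {p : Fin 7 → Fin 3 → K} (hp : IsConvexPolygon p) {φ : (Fin 3 → K) →ₗ[K] n → K}
    (hφ : ∀ i j, 0 ≤ φ (p i) j) : NonnegRankLE (Matrix.of (φ ∘ p)) 6 := by
  obtain ⟨s, hs, hs'⟩ := hp.exists_not_edgeObstructed_and_reflectPolygon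
  have hq := hp.rotate s
  have hqφ i j : 0 ≤ φ (rotatePolygon s p i) j := hφ (i + s) j
  refine .of_submatrix_perm (Equiv.addRight s) (.of_row_scaling hq.heptagonWeight_pos ?_)
  let f (j : n) : (Fin 3 → K) →ₗ[K] K := LinearMap.proj j ∘ₗ φ
  refine .six_of_row_relations (fun i j => mul_nonneg (hq.heptagonWeight_pos i).le (hqφ i j))
    (fun j => ?_) (fun j => ?_) (fun j => ?_)
    fun j => hq.heptagonWeight_mul_le_add hs (f := f j) (hqφ · j)
  · have hleft := congrArg (f j) (heptagonWeight_relation_left (rotatePolygon s p))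
    simpa only [map_add, map_smul, smul_eq_mul] using! hleft
  · have hright := congrArg (f j) (heptagonWeight_relation_right (rotatePolygon s p))
    simpa only [map_add, map_smul, smul_eq_mul] using! hright
  · have hrefl := hq.reflect.heptagonWeight_mul_le_add hs' (f := -f j)
      fun i => by simpa [f, reflectPolygon] using hqφ i.rev j
    simp only [heptagonWeight_reflectPolygon, reflectPolygon, map_neg, LinearMap.neg_apply,
      neg_neg] at hrefl
    exact hrefl.trans_eq (add_comm _ _)

end IsConvexPolygon

end Heptagon

theorem nonneg_rank_le_six_of_seven_rows_general {K n : Type*} [Field K] [LinearOrder K]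
    [IsStrictOrderedRing K] [Fintype n] (A : Matrix (Fin 7) n K) (hA : ∀ i j, 0 ≤ A i j)
    (hrank : A.rank ≤ 3) : NonnegRankLE A 6 := by
  by_contra hN
  obtain ⟨φ, p, rfl⟩ := exists_eq_linearMap_comp_of_rank_le hrank
  have hp : ConicIndependent K p := (ConicIndependent.of_not_nonnegRankLE hA hN).of_linearMap_comp
  obtain ⟨σ, hσ⟩ := hp.exists_perm_isConvexPolygon
  exact hN (.of_submatrix_perm σ (hσ.nonnegRankLE_six fun i => hA (σ i)))

/-- A rank-three nonnegative 7×n real matrix has nonnegative rank at most 6,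
witnessed by an explicit nonnegative factorization through 6. -/
theorem nonneg_rank_le_six_of_seven_rows (n : ℕ) (A : Matrix (Fin 7) (Fin n) ℝ)
    (hA : ∀ i j, 0 ≤ A i j) (hrank : A.rank = 3) :
    ∃ (B : Matrix (Fin 7) (Fin 6) ℝ) (C : Matrix (Fin 6) (Fin n) ℝ),
      (∀ i j, 0 ≤ B i j) ∧ (∀ i j, 0 ≤ C i j) ∧ A = B * C :=
  nonneg_rank_le_six_of_seven_rows_general A hA hrank.le
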